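/- arXiv:1504.04107 — 3 statements merged into one kernel-verified Lean document; each statement's English description precedes it below -/
import Mathlib

section
/- Let k ≥ 2 and suppose Ω_k > 2 (so Ω_{k−1} = Ω_k − 1 > 1). Set r = (Ω_k − 2)/(Ω_k − 1), and define δ by δ₀ = 1/Ω_{k−1}² and δ_j = 0 for 1 ≤ j ≤ k−1, and β by β_{k−1} = (Ω_{k−1} + 1)/Ω_{k−1} and β_j = 0 for 0 ≤ j ≤ k−2. Then: (a) δ, β are nonnegative and satisfy the order-2 conditions with parameter r; (b) for any real s > 0 and nonnegative vectors δ', β' satisfying the order-2 conditions with parameter s, one has s ≤ r; and (c) the pair (δ, β) above is the unique pair of nonnegative vectors satisfying the order-2 conditions with parameter r. That is, the optimal SSP coefficient among second-order k-step formulae equals (Ω_k − 2)/(Ω_k − 1) and is attained by the stated formula. -/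
/-- Cumulative step-size ratios: `OmegaSum ω j = ω 1 + ⋯ + ω j` (with `OmegaSum ω 0 = 0`). -/
noncomputable def OmegaSum (ω : ℕ → ℝ) (j : ℕ) : ℝ := ∑ i ∈ Finset.range j, ω (i + 1)

/-- The order-`p` conditions with parameter `r` for a `k`-step explicit linear multistep
formula with coefficient vectors `δ`, `β` and step-size ratios `ω`:
`Σ_{j<k} (δ j + r β j) = 1` and, for `1 ≤ m ≤ p`,
`Σ_{j<k} ( Ω_j^m (δ j + r β j) + m Ω_j^{m-1} β j ) = Ω_k^m`. -/
def OrderCond (k p : ℕ) (ω : ℕ → ℝ) (r : ℝ) (δ β : ℕ → ℝ) : Prop :=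
  (∑ j ∈ Finset.range k, (δ j + r * β j)) = 1 ∧
  ∀ m : ℕ, 1 ≤ m → m ≤ p →
    (∑ j ∈ Finset.range k,
        ((OmegaSum ω j) ^ m * (δ j + r * β j)
          + (m : ℝ) * (OmegaSum ω j) ^ (m - 1) * β j))
      = (OmegaSum ω k) ^ m

/-!
For `q` of degree at most `2` the order conditions read
`Σ_j ((δ_j + s β_j) q(Ω_j) + β_j q'(Ω_j)) = q(Ω_k)`. Take `q = X (Ω_k - X)`, for which the
right-hand side is `0`. At the nodes `q ≥ 0`, with equality only at `Ω_0 = 0`, and as soon as `s`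
is at least the claimed optimum also `s q + q' ≥ 0`, with equality possible only at `Ω_{k-1}`.
Hence only `δ_0` and `β_{k-1}` can be nonzero, and the three remaining equations
determine `s`, `δ_0` and `β_{k-1}`.
-/

open Finset Polynomial

section Nodes

variable {k : ℕ} {ω : ℕ → ℝ}

lemma omegaSum_zero (ω : ℕ → ℝ) : OmegaSum ω 0 = 0 := by
  simp [OmegaSum]

lemma omegaSum_succ (ω : ℕ → ℝ) (j : ℕ) : OmegaSum ω (j + 1) = OmegaSum ω j + ω (j + 1) :=
  sum_range_succ _ _

lemma omegaSum_strictMonoOn (hω : ∀ i, 1 ≤ i → i ≤ k → 0 < ω i) :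
    StrictMonoOn (OmegaSum ω) (Set.Iic k) := by
  refine strictMonoOn_Iic_of_lt_succ fun j hj => ?_
  rw [Nat.succ_eq_succ, Nat.succ_eq_add_one, omegaSum_succ]
  exact lt_add_of_pos_right _ (hω (j + 1) (Nat.le_add_left 1 j) hj)

lemma omegaSum_nonneg (hω : ∀ i, 1 ≤ i → i ≤ k → 0 < ω i) {j : ℕ} (hj : j ≤ k) :
    0 ≤ OmegaSum ω j :=
  sum_nonneg fun i hi =>
    (hω (i + 1) (Nat.le_add_left 1 i) (by rw [mem_range] at hi; omega)).le

end Nodes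

namespace OrderCond

variable {k p : ℕ} {ω δ β δ' β' : ℕ → ℝ} {s : ℝ}

lemma congr (h : OrderCond k p ω s δ β) (hδ : ∀ j < k, δ j = δ' j) (hβ : ∀ j < k, β j = β' j) :
    OrderCond k p ω s δ' β' := by
  refine ⟨?_, fun m hm hmp => ?_⟩
  · rw [← h.1]
    refine sum_congr rfl fun j hj => ?_
    rw [hδ j (mem_range.1 hj), hβ j (mem_range.1 hj)]
  · rw [← h.2 m hm hmp]
    refine sum_congr rfl fun j hj => ?_
    rw [hδ j (mem_range.1 hj), hβ j (mem_range.1 hj)]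

lemma sum_eval_add_eval_derivative (h : OrderCond k p ω s δ β) {q : ℝ[X]}
    (hq : q.natDegree ≤ p) :
    ∑ j ∈ range k, ((δ j + s * β j) * q.eval (OmegaSum ω j)
      + β j * q.derivative.eval (OmegaSum ω j)) = q.eval (OmegaSum ω k) := by
  refine induction_with_natDegree_le (motive := fun q => ∑ j ∈ range k,
    ((δ j + s * β j) * q.eval (OmegaSum ω j) + β j * q.derivative.eval (OmegaSum ω j))
      = q.eval (OmegaSum ω k)) p (by simp) (fun m c _ hmp => ?_) (fun f g _ _ hf hg => ?_) q hq
  · have hmonomial : ∑ j ∈ range k, (OmegaSum ω j ^ m * (δ j + s * β j)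
        + m * OmegaSum ω j ^ (m - 1) * β j) = OmegaSum ω k ^ m := by
      rcases m.eq_zero_or_pos with rfl | hm
      · simpa using h.1
      · exact h.2 m hm hmp
    simp only [derivative_C_mul_X_pow, eval_mul, eval_C, eval_pow, eval_X]
    rw [← hmonomial, mul_sum]
    exact sum_congr rfl fun j _ => by ring
  · simp only [derivative_add, eval_add]
    rw [← hf, ← hg, ← sum_add_distrib]
    exact sum_congr rfl fun j _ => by ring

end OrderCond

/-- The value `s * q x + q' x` at the test polynomial `q = X * (W - X)`: the weight that `β j`
receives at the node `x = Ω_j` when the order-2 conditions with `W = Ω_k` are combined into `q`. -/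
def dualWeight (W s x : ℝ) : ℝ := s * (x * (W - x)) + (W - 2 * x)

section DualWeight

variable {a h s x : ℝ}

lemma le_dualWeight (ha : 0 < a) (hh : 0 < h) (hs : (a - h) / (a * h) ≤ s) (hx : 0 ≤ x)
    (hxa : x ≤ a) :
    (a - x) * (h * (a + h) + (a - h) * x) / (a * h) ≤ dualWeight (a + h) s x := by
  have hq : 0 ≤ x * (a + h - x) := mul_nonneg hx (by linarith)
  calc (a - x) * (h * (a + h) + (a - h) * x) / (a * h)
      = (a - h) / (a * h) * (x * (a + h - x)) + (a + h - 2 * x) := by field_simp; ring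
    _ ≤ s * (x * (a + h - x)) + (a + h - 2 * x) := by gcongr

lemma dualWeight_nonneg (hh : 0 < h) (hha : h ≤ a) (hs : (a - h) / (a * h) ≤ s) (hx : 0 ≤ x)
    (hxa : x ≤ a) : 0 ≤ dualWeight (a + h) s x := by
  have ha : 0 < a := hh.trans_le hha
  have : 0 ≤ a - x := sub_nonneg.2 hxa
  have : 0 ≤ a - h := sub_nonneg.2 hha
  exact le_trans (by positivity) (le_dualWeight ha hh hs hx hxa)

lemma dualWeight_pos (hh : 0 < h) (hha : h ≤ a) (hs : (a - h) / (a * h) ≤ s) (hx : 0 ≤ x)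
    (hxa : x < a) : 0 < dualWeight (a + h) s x := by
  have ha : 0 < a := hh.trans_le hha
  have : 0 < a - x := sub_pos.2 hxa
  have : 0 ≤ a - h := sub_nonneg.2 hha
  exact lt_of_lt_of_le (by positivity) (le_dualWeight ha hh hs hx hxa.le)

end DualWeight

lemma OrderCond.sum_mul_dualWeight_eq_zero {k : ℕ} {ω δ β : ℕ → ℝ} {s : ℝ}
    (h : OrderCond k 2 ω s δ β) :
    ∑ j ∈ range k, (δ j * (OmegaSum ω j * (OmegaSum ω k - OmegaSum ω j))
      + β j * dualWeight (OmegaSum ω k) s (OmegaSum ω j)) = 0 := by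
  have hdeg : (X * (C (OmegaSum ω k) - X) : ℝ[X]).natDegree ≤ 2 := by compute_degree
  have htest := h.sum_eval_add_eval_derivative hdeg
  simp only [derivative_mul, derivative_X, derivative_sub, derivative_C, eval_add, eval_mul,
    eval_sub, eval_X, eval_C, eval_one, eval_zero, sub_self, mul_zero] at htest
  rw [← htest]
  exact sum_congr rfl fun j _ => by rw [dualWeight]; ring

/-- The optimal SSP coefficient of second-order formulae with `k = n + 1` steps, for an arbitrary
last ratio `ω k`; it equals `(Ω_k - 2) / (Ω_k - 1)` when `ω k = 1`. -/
noncomputable def optimalSSPCoeff (ω : ℕ → ℝ) (n : ℕ) : ℝ :=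
  (OmegaSum ω n - ω (n + 1)) / (OmegaSum ω n * ω (n + 1))

/-- The vector `δ` of the optimal second-order formula with `n + 1` steps, extended by zero. -/
noncomputable def optimalDelta (ω : ℕ → ℝ) (n : ℕ) : ℕ → ℝ :=
  Pi.single 0 ((ω (n + 1) / OmegaSum ω n) ^ 2)

/-- The vector `β` of the optimal second-order formula with `n + 1` steps, extended by zero. -/
noncomputable def optimalBeta (ω : ℕ → ℝ) (n : ℕ) : ℕ → ℝ :=
  Pi.single n (OmegaSum ω (n + 1) * ω (n + 1) / OmegaSum ω n)

section Normalized

variable {ω : ℕ → ℝ} {n : ℕ}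

lemma optimalSSPCoeff_of_eq_one (hωn : ω (n + 1) = 1) :
    optimalSSPCoeff ω n = (OmegaSum ω (n + 1) - 2) / (OmegaSum ω (n + 1) - 1) := by
  rw [optimalSSPCoeff, omegaSum_succ, hωn]
  ring

lemma optimalDelta_of_eq_one (hωn : ω (n + 1) = 1) :
    optimalDelta ω n = fun j => if j = 0 then 1 / OmegaSum ω n ^ 2 else 0 := by
  ext j
  rw [optimalDelta, Pi.single_apply, hωn, one_div_pow]

lemma optimalBeta_of_eq_one (hωn : ω (n + 1) = 1) :
    optimalBeta ω n = fun j => if j = n then (OmegaSum ω n + 1) / OmegaSum ω n else 0 := by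
  ext j
  rw [optimalBeta, Pi.single_apply, omegaSum_succ, hωn, mul_one]

end Normalized

section Optimality

variable {ω δ β : ℕ → ℝ} {n : ℕ} {s d b : ℝ}

lemma orderCond_two_single_iff :
    OrderCond (n + 1) 2 ω s (Pi.single 0 d) (Pi.single n b) ↔
      d + s * b = 1 ∧
      OmegaSum ω n * (s * b) + b = OmegaSum ω (n + 1) ∧
      OmegaSum ω n ^ 2 * (s * b) + 2 * OmegaSum ω n * b = OmegaSum ω (n + 1) ^ 2 := by
  have orders_one_two (P : ℕ → Prop) : (∀ m, 1 ≤ m → m ≤ 2 → P m) ↔ P 1 ∧ P 2 :=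
    ⟨fun h => ⟨h 1 le_rfl one_le_two, h 2 one_le_two le_rfl⟩,
      fun h m _ _ => by interval_cases m; exacts [h.1, h.2]⟩
  rw [OrderCond, orders_one_two]
  simp [Pi.single_apply, sum_add_distrib, mul_add, omegaSum_zero]

lemma orderCond_two_single_iff_eq_optimal (hΩ : 0 < OmegaSum ω n) (hω : 0 < ω (n + 1)) :
    OrderCond (n + 1) 2 ω s (Pi.single 0 d) (Pi.single n b) ↔
      s = optimalSSPCoeff ω n ∧ d = (ω (n + 1) / OmegaSum ω n) ^ 2 ∧
      b = OmegaSum ω (n + 1) * ω (n + 1) / OmegaSum ω n := by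
  rw [orderCond_two_single_iff, optimalSSPCoeff, omegaSum_succ]
  set a := OmegaSum ω n
  set h := ω (n + 1)
  constructor
  · rintro ⟨order_zero, order_one, order_two⟩
    have hb : b * a = (a + h) * h := by linear_combination order_two - a * order_one
    have hs : s * (a * h) = a - h := by
      refine mul_left_cancel₀ (by positivity : a + h ≠ 0) ?_
      linear_combination a * order_one - (a * s + 1) * hb
    rw [← eq_div_iff (by positivity)] at hb hs
    refine ⟨hs, ?_, hb⟩
    rw [eq_sub_of_add_eq order_zero, hs, hb]
    field_simp
    ring
  · rintro ⟨rfl, rfl, rfl⟩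
    refine ⟨?_, ?_, ?_⟩ <;> field_simp <;> ring

lemma orderCond_two_optimal (hΩ : 0 < OmegaSum ω n) (hω : 0 < ω (n + 1)) :
    OrderCond (n + 1) 2 ω (optimalSSPCoeff ω n) (optimalDelta ω n) (optimalBeta ω n) :=
  (orderCond_two_single_iff_eq_optimal hΩ hω).2 ⟨rfl, rfl, rfl⟩

lemma optimalDelta_nonneg (j : ℕ) : 0 ≤ optimalDelta ω n j :=
  (Pi.single_nonneg.2 (sq_nonneg _) : 0 ≤ optimalDelta ω n) j

lemma optimalBeta_nonneg (hω : ∀ i, 1 ≤ i → i ≤ n + 1 → 0 < ω i) (j : ℕ) :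
    0 ≤ optimalBeta ω n j := by
  have hΩn := omegaSum_nonneg hω n.le_succ
  have hΩk := omegaSum_nonneg hω le_rfl
  have hωk := (hω (n + 1) n.succ_pos le_rfl).le
  have : 0 ≤ optimalBeta ω n := Pi.single_nonneg.2 (by positivity)
  exact this j

-- Complementary slackness: every term of `OrderCond.sum_mul_dualWeight_eq_zero` is nonnegative.
lemma OrderCond.mul_dualWeight_eq_zero (h : OrderCond (n + 1) 2 ω s δ β)
    (hω : ∀ i, 1 ≤ i → i ≤ n + 1 → 0 < ω i) (hωΩ : ω (n + 1) ≤ OmegaSum ω n)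
    (hδ : ∀ j < n + 1, 0 ≤ δ j) (hβ : ∀ j < n + 1, 0 ≤ β j) (hs : optimalSSPCoeff ω n ≤ s)
    {j : ℕ} (hj : j < n + 1) :
    δ j * (OmegaSum ω j * (OmegaSum ω (n + 1) - OmegaSum ω j)) = 0 ∧
      β j * dualWeight (OmegaSum ω (n + 1)) s (OmegaSum ω j) = 0 := by
  have hΩ := (omegaSum_strictMonoOn hω).monotoneOn
  have hωk : 0 < ω (n + 1) := hω (n + 1) n.succ_pos le_rfl
  have δ_term_nonneg : ∀ i ∈ range (n + 1),
      0 ≤ δ i * (OmegaSum ω i * (OmegaSum ω (n + 1) - OmegaSum ω i)) := fun i hi => by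
    have hi := mem_range.1 hi
    exact mul_nonneg (hδ i hi) (mul_nonneg (omegaSum_nonneg hω hi.le)
      (sub_nonneg.2 (hΩ hi.le Set.self_mem_Iic hi.le)))
  have β_term_nonneg : ∀ i ∈ range (n + 1),
      0 ≤ β i * dualWeight (OmegaSum ω (n + 1)) s (OmegaSum ω i) := fun i hi => by
    have hi := mem_range.1 hi
    rw [omegaSum_succ]
    exact mul_nonneg (hβ i hi) (dualWeight_nonneg hωk hωΩ hs (omegaSum_nonneg hω hi.le)
      (hΩ hi.le n.le_succ (Nat.lt_succ_iff.1 hi)))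
  have hj := mem_range.2 hj
  rw [← add_eq_zero_iff_of_nonneg (δ_term_nonneg j hj) (β_term_nonneg j hj)]
  exact (sum_eq_zero_iff_of_nonneg fun i hi => add_nonneg (δ_term_nonneg i hi)
    (β_term_nonneg i hi)).1 h.sum_mul_dualWeight_eq_zero j hj

lemma OrderCond.eq_single_of_optimalSSPCoeff_le (h : OrderCond (n + 1) 2 ω s δ β)
    (hω : ∀ i, 1 ≤ i → i ≤ n + 1 → 0 < ω i) (hωΩ : ω (n + 1) ≤ OmegaSum ω n)
    (hδ : ∀ j < n + 1, 0 ≤ δ j) (hβ : ∀ j < n + 1, 0 ≤ β j) (hs : optimalSSPCoeff ω n ≤ s)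
    {j : ℕ} (hj : j < n + 1) :
    δ j = (Pi.single 0 (δ 0) : ℕ → ℝ) j ∧ β j = (Pi.single n (β n) : ℕ → ℝ) j := by
  have hΩ := omegaSum_strictMonoOn hω
  obtain ⟨δ_term, β_term⟩ := h.mul_dualWeight_eq_zero hω hωΩ hδ hβ hs hj
  constructor
  · rcases j.eq_zero_or_pos with rfl | hj0
    · rw [Pi.single_eq_same]
    · have node_pos : 0 < OmegaSum ω j := by
        simpa only [omegaSum_zero] using hΩ (Nat.zero_le _) hj.le hj0
      have node_lt : OmegaSum ω j < OmegaSum ω (n + 1) := hΩ hj.le Set.self_mem_Iic hj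
      rw [Pi.single_eq_of_ne hj0.ne']
      exact (mul_eq_zero.1 δ_term).resolve_right (mul_pos node_pos (sub_pos.2 node_lt)).ne'
  · rcases (Nat.lt_succ_iff.1 hj).eq_or_lt with rfl | hjn
    · rw [Pi.single_eq_same]
    · have weight_pos := dualWeight_pos (hω (n + 1) n.succ_pos le_rfl) hωΩ hs
        (omegaSum_nonneg hω hj.le) (hΩ hj.le n.le_succ hjn)
      rw [← omegaSum_succ] at weight_pos
      rw [Pi.single_eq_of_ne hjn.ne]
      exact (mul_eq_zero.1 β_term).resolve_right weight_pos.ne'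

lemma OrderCond.eq_optimal_of_optimalSSPCoeff_le (h : OrderCond (n + 1) 2 ω s δ β)
    (hω : ∀ i, 1 ≤ i → i ≤ n + 1 → 0 < ω i) (hωΩ : ω (n + 1) ≤ OmegaSum ω n)
    (hδ : ∀ j < n + 1, 0 ≤ δ j) (hβ : ∀ j < n + 1, 0 ≤ β j) (hs : optimalSSPCoeff ω n ≤ s) :
    s = optimalSSPCoeff ω n ∧
      ∀ j < n + 1, δ j = optimalDelta ω n j ∧ β j = optimalBeta ω n j := by
  have hsingle : ∀ j < n + 1, δ j = (Pi.single 0 (δ 0) : ℕ → ℝ) j ∧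
      β j = (Pi.single n (β n) : ℕ → ℝ) j :=
    fun _ => h.eq_single_of_optimalSSPCoeff_le hω hωΩ hδ hβ hs
  have hωk : 0 < ω (n + 1) := hω (n + 1) n.succ_pos le_rfl
  obtain ⟨s_eq, δ_zero, β_last⟩ :=
    (orderCond_two_single_iff_eq_optimal (hωk.trans_le hωΩ) hωk).1
      (h.congr (fun j hj => (hsingle j hj).1) fun j hj => (hsingle j hj).2)
  refine ⟨s_eq, fun j hj => ?_⟩
  rw [optimalDelta, optimalBeta, ← δ_zero, ← β_last]
  exact hsingle j hj

end Optimality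

theorem optimal_second_order_formula_general (n : ℕ) (ω : ℕ → ℝ)
    (hω : ∀ i, 1 ≤ i → i ≤ n + 1 → 0 < ω i) (hωΩ : ω (n + 1) ≤ OmegaSum ω n) :
    ((∀ j < n + 1, 0 ≤ optimalDelta ω n j) ∧ (∀ j < n + 1, 0 ≤ optimalBeta ω n j) ∧
      OrderCond (n + 1) 2 ω (optimalSSPCoeff ω n) (optimalDelta ω n) (optimalBeta ω n)) ∧
    (∀ s : ℝ, ∀ δ' β' : ℕ → ℝ,
      (∀ j < n + 1, 0 ≤ δ' j) → (∀ j < n + 1, 0 ≤ β' j) → OrderCond (n + 1) 2 ω s δ' β' →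
      s ≤ optimalSSPCoeff ω n) ∧
    (∀ δ' β' : ℕ → ℝ,
      (∀ j < n + 1, 0 ≤ δ' j) → (∀ j < n + 1, 0 ≤ β' j) →
      OrderCond (n + 1) 2 ω (optimalSSPCoeff ω n) δ' β' →
      ∀ j < n + 1, δ' j = optimalDelta ω n j ∧ β' j = optimalBeta ω n j) := by
  have hωk : 0 < ω (n + 1) := hω (n + 1) n.succ_pos le_rfl
  refine ⟨⟨fun j _ => optimalDelta_nonneg j, fun j _ => optimalBeta_nonneg hω j,
    orderCond_two_optimal (hωk.trans_le hωΩ) hωk⟩, fun s δ' β' hδ hβ h => ?_,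
    fun δ' β' hδ hβ h => (h.eq_optimal_of_optimalSSPCoeff_le hω hωΩ hδ hβ le_rfl).2⟩
  rcases le_total s (optimalSSPCoeff ω n) with hs | hs
  · exact hs
  · exact (h.eq_optimal_of_optimalSSPCoeff_le hω hωΩ hδ hβ hs).1.le

/-- **Optimal second-order formula.**  For `k ≥ 2` with `ω_k = 1` and `Ω_k > 2`, the
formula with `δ₀ = 1/Ω_{k−1}²`, `β_{k−1} = (Ω_{k−1}+1)/Ω_{k−1}` and all other entries
zero is nonnegative, satisfies the order-2 conditions with parameter
`r = (Ω_k − 2)/(Ω_k − 1)`, no larger parameter is achievable, and it is the unique such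
formula for this `r`. -/
theorem optimal_second_order_formula
    (k : ℕ) (hk : 2 ≤ k)
    (ω : ℕ → ℝ) (hω : ∀ i, 1 ≤ i → i ≤ k → 0 < ω i) (hωk : ω k = 1)
    (hΩk : 2 < OmegaSum ω k)
    (r : ℝ) (hr : r = (OmegaSum ω k - 2) / (OmegaSum ω k - 1))
    (δ β : ℕ → ℝ)
    (hδdef : δ = fun j => if j = 0 then 1 / (OmegaSum ω (k - 1)) ^ 2 else 0)
    (hβdef : β = fun j => if j = k - 1 then
      (OmegaSum ω (k - 1) + 1) / OmegaSum ω (k - 1) else 0) :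
    ((∀ j < k, 0 ≤ δ j) ∧ (∀ j < k, 0 ≤ β j) ∧ OrderCond k 2 ω r δ β) ∧
    (∀ s : ℝ, 0 < s → ∀ δ' β' : ℕ → ℝ,
      (∀ j < k, 0 ≤ δ' j) → (∀ j < k, 0 ≤ β' j) → OrderCond k 2 ω s δ' β' → s ≤ r) ∧
    (∀ δ' β' : ℕ → ℝ,
      (∀ j < k, 0 ≤ δ' j) → (∀ j < k, 0 ≤ β' j) → OrderCond k 2 ω r δ' β' →
      ∀ j < k, δ' j = δ j ∧ β' j = β j) := by
  obtain ⟨n, rfl⟩ : ∃ n, k = n + 1 := ⟨k - 1, by omega⟩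
  rw [hr, hδdef, hβdef, Nat.add_sub_cancel, ← optimalSSPCoeff_of_eq_one hωk,
    ← optimalDelta_of_eq_one hωk, ← optimalBeta_of_eq_one hωk]
  rw [omegaSum_succ] at hΩk
  obtain ⟨feasible, optimal, unique⟩ :=
    optimal_second_order_formula_general n ω hω (by linarith)
  exact ⟨feasible, fun s _ => optimal s, unique⟩
end

section
/- Fix k ∈ {4, 5} and real numbers 0 < μ⁻ ≤ μ⁺. Let (μ_n)_{n ≥ k} be a sequence with μ⁻ ≤ μ_n ≤ μ⁺ for all n, let h₁, …, h_{k−1} be positive reals, and define recursively for n ≥ k: h_n = S_n · μ_n / (S_n + 2μ_n), where S_n = Σ_{j=1}^{k−1} h_{n−j}. Then ((k−3)/(k−1))·μ⁻ ≤ liminf_{n→∞} h_n ≤ limsup_{n→∞} h_n ≤ ((k−3)/(k−1))·μ⁺. In particular, if μ_n is constantly equal to μ > 0, then h_n → ((k−3)/(k−1))·μ as n → ∞. -/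
/-!
The step `S x / (S + c x)` is the inverse of `1 / x + c / S`, so it is monotone in `S` and in `x`.
If `a ≤ μ n` eventually and `L = liminf h > 0`, the window sums are eventually at least `m y` for
every `y < L`; monotonicity and then `y → L` turn the recursion into
`L ≥ m L a / (m L + c a)`, and cancelling `L` gives `L ≥ (m - c) / m * a`. The bound on the limsup
is dual. That `L > 0` when `c < m` holds because a constant below the fixed point `(m - c) / m * a`
which bounds `h` from below on one window does so forever.
-/

open Filter Topology

/-- The greedy step size for a window of `m = k - 1` steps of total length `S` and a forward Euler
bound `x`. The third-order methods have `c = 2`. -/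
noncomputable def greedyStep (c S x : ℝ) : ℝ := S * x / (S + c * x)

section greedyStep

variable {c x : ℝ}

lemma greedyStep_eq_inv {S : ℝ} (hS : S ≠ 0) (hx : x ≠ 0) :
    greedyStep c S x = (1 / x + c / S)⁻¹ := by
  rw [greedyStep, div_add_div _ _ hx hS, inv_div, one_mul, mul_comm x S, mul_comm x c]

lemma greedyStep_pos {S : ℝ} (hc : 0 ≤ c) (hS : 0 < S) (hx : 0 < x) : 0 < greedyStep c S x := by
  unfold greedyStep
  positivity

lemma greedyStep_le_greedyStep {s S y : ℝ} (hc : 0 ≤ c) (hs : 0 < s) (hx : 0 < x)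
    (hsS : s ≤ S) (hxy : x ≤ y) : greedyStep c s x ≤ greedyStep c S y := by
  have hS : 0 < S := hs.trans_le hsS
  have hy : 0 < y := hx.trans_le hxy
  rw [greedyStep_eq_inv hs.ne' hx.ne', greedyStep_eq_inv hS.ne' hy.ne']
  gcongr

lemma greedyStep_le_right {S : ℝ} (hc : 0 ≤ c) (hS : 0 < S) (hx : 0 < x) :
    greedyStep c S x ≤ x := by
  rw [greedyStep_eq_inv hS.ne' hx.ne']
  refine inv_le_of_inv_le₀ hx ?_
  rw [one_div]
  exact le_add_of_nonneg_right (by positivity)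

lemma continuousAt_greedyStep_mul_left {w y : ℝ} (hc : 0 ≤ c) (hw : 0 < w) (hx : 0 < x)
    (hy : 0 < y) : ContinuousAt (fun z ↦ greedyStep c (w * z) x) y := by
  unfold greedyStep
  exact ContinuousAt.div (by fun_prop) (by fun_prop) (by positivity)

lemma le_greedyStep_mul_self_iff {w y : ℝ} (hc : 0 ≤ c) (hw : 0 < w) (hx : 0 < x) (hy : 0 < y) :
    y ≤ greedyStep c (w * y) x ↔ y ≤ (w - c) / w * x := by
  have hden : 0 < w * y + c * x := by positivity
  calc y ≤ greedyStep c (w * y) x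
      ↔ y * (w * y + c * x) ≤ y * (w * x) := by
        rw [greedyStep, le_div_iff₀ hden, mul_comm w y, mul_assoc y w x]
    _ ↔ w * y + c * x ≤ w * x := mul_le_mul_iff_right₀ hy
    _ ↔ y * w ≤ (w - c) * x := by constructor <;> intro h <;> linarith
    _ ↔ y ≤ (w - c) / w * x := by rw [div_mul_eq_mul_div, le_div_iff₀ hw]

lemma greedyStep_mul_self_le_iff {w y : ℝ} (hc : 0 ≤ c) (hw : 0 < w) (hx : 0 < x) (hy : 0 < y) :
    greedyStep c (w * y) x ≤ y ↔ (w - c) / w * x ≤ y := by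
  have hden : 0 < w * y + c * x := by positivity
  calc greedyStep c (w * y) x ≤ y
      ↔ y * (w * x) ≤ y * (w * y + c * x) := by
        rw [greedyStep, div_le_iff₀ hden, mul_comm w y, mul_assoc y w x]
    _ ↔ w * x ≤ w * y + c * x := mul_le_mul_iff_right₀ hy
    _ ↔ (w - c) * x ≤ y * w := by constructor <;> intro h <;> linarith
    _ ↔ (w - c) / w * x ≤ y := by rw [div_mul_eq_mul_div, div_le_iff₀ hw]

end greedyStep

/-- The sum of the `m` values of `h` preceding index `n`. For `n < m` the truncated subtraction
`n - j` repeats `h 0`; the recursion only uses `m < n`. -/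
def windowSum (m : ℕ) (h : ℕ → ℝ) (n : ℕ) : ℝ := ∑ j ∈ Finset.Icc 1 m, h (n - j)

section windowSum

variable {m n : ℕ} {h : ℕ → ℝ} {y : ℝ}

lemma windowSum_pos (hm : 0 < m) (hh : ∀ j ∈ Finset.Icc 1 m, 0 < h (n - j)) :
    0 < windowSum m h n :=
  Finset.sum_pos hh (Finset.nonempty_Icc.mpr hm)

lemma mul_le_windowSum (hh : ∀ j ∈ Finset.Icc 1 m, y ≤ h (n - j)) : m * y ≤ windowSum m h n := by
  simpa [windowSum] using Finset.card_nsmul_le_sum (Finset.Icc 1 m) (fun j ↦ h (n - j)) y hh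

lemma windowSum_le_mul (hh : ∀ j ∈ Finset.Icc 1 m, h (n - j) ≤ y) : windowSum m h n ≤ m * y := by
  simpa [windowSum] using Finset.sum_le_card_nsmul (Finset.Icc 1 m) (fun j ↦ h (n - j)) y hh

end windowSum

lemma eventually_forall_mem_sub {p : ℕ → Prop} (hp : ∀ᶠ n in atTop, p n) (s : Finset ℕ) :
    ∀ᶠ n in atTop, ∀ j ∈ s, p (n - j) :=
  (eventually_all_finset s).mpr fun j _ ↦ (tendsto_sub_atTop_nat j).eventually hp

/-- `h` is a sequence of `(m + 1)`-step greedy step sizes with forward Euler bounds `μ`: the steps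
`h 1, …, h m` are arbitrary positive numbers, and every later step is the greedy one. The value
`h 0` is never used. -/
structure IsGreedyStepSize (m : ℕ) (c : ℝ) (μ h : ℕ → ℝ) : Prop where
  window_pos : 0 < m
  coeff_nonneg : 0 ≤ c
  bound_pos : ∀ n, m < n → 0 < μ n
  init_pos : ∀ j, 1 ≤ j → j ≤ m → 0 < h j
  eq_greedyStep : ∀ n, m < n → h n = greedyStep c (windowSum m h n) (μ n)

namespace IsGreedyStepSize

variable {m : ℕ} {c a b : ℝ} {μ h : ℕ → ℝ}

lemma pos (H : IsGreedyStepSize m c μ h) {n : ℕ} (hn : 1 ≤ n) : 0 < h n := by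
  induction n using Nat.strong_induction_on with
  | _ n ih =>
    rcases le_or_gt n m with hnm | hmn
    · exact H.init_pos n hn hnm
    · rw [H.eq_greedyStep n hmn]
      refine greedyStep_pos H.coeff_nonneg (windowSum_pos H.window_pos fun j hj ↦ ?_)
        (H.bound_pos n hmn)
      rw [Finset.mem_Icc] at hj
      exact ih (n - j) (by omega) (by omega)

lemma windowSum_pos (H : IsGreedyStepSize m c μ h) {n : ℕ} (hn : m < n) :
    0 < windowSum m h n :=
  _root_.windowSum_pos H.window_pos fun j hj ↦ H.pos (by rw [Finset.mem_Icc] at hj; omega)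

lemma le_bound (H : IsGreedyStepSize m c μ h) {n : ℕ} (hn : m < n) : h n ≤ μ n := by
  rw [H.eq_greedyStep n hn]
  exact greedyStep_le_right H.coeff_nonneg (H.windowSum_pos hn) (H.bound_pos n hn)

lemma greedyStep_le {y : ℝ} (H : IsGreedyStepSize m c μ h) {n : ℕ} (hn : m < n) (ha : 0 < a)
    (hμ : a ≤ μ n) (hy : 0 < y) (hh : ∀ j ∈ Finset.Icc 1 m, y ≤ h (n - j)) :
    greedyStep c (m * y) a ≤ h n := by
  have hm : (0 : ℝ) < m := Nat.cast_pos.mpr H.window_pos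
  rw [H.eq_greedyStep n hn]
  exact greedyStep_le_greedyStep H.coeff_nonneg (mul_pos hm hy) ha (mul_le_windowSum hh) hμ

lemma le_greedyStep {y : ℝ} (H : IsGreedyStepSize m c μ h) {n : ℕ} (hn : m < n) (hμ : μ n ≤ b)
    (hh : ∀ j ∈ Finset.Icc 1 m, h (n - j) ≤ y) : h n ≤ greedyStep c (m * y) b := by
  rw [H.eq_greedyStep n hn]
  exact greedyStep_le_greedyStep H.coeff_nonneg (H.windowSum_pos hn) (H.bound_pos n hn)
    (windowSum_le_mul hh) hμ

lemma eventually_pos (H : IsGreedyStepSize m c μ h) : ∀ᶠ n in atTop, 0 < h n :=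
  (eventually_ge_atTop 1).mono fun _ ↦ H.pos

lemma isBoundedUnder_ge (H : IsGreedyStepSize m c μ h) : atTop.IsBoundedUnder (· ≥ ·) h :=
  isBoundedUnder_of_eventually_ge (H.eventually_pos.mono fun _ ↦ le_of_lt)

lemma isBoundedUnder_le (H : IsGreedyStepSize m c μ h) (hμ : atTop.IsBoundedUnder (· ≤ ·) μ) :
    atTop.IsBoundedUnder (· ≤ ·) h :=
  hμ.mono_le ((eventually_gt_atTop m).mono fun _ ↦ H.le_bound)

lemma liminf_nonneg (H : IsGreedyStepSize m c μ h) (hμ : atTop.IsBoundedUnder (· ≤ ·) μ) :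
    0 ≤ liminf h atTop :=
  le_liminf_of_le (H.isBoundedUnder_le hμ).isCoboundedUnder_ge
    (H.eventually_pos.mono fun _ ↦ le_of_lt)

lemma liminf_le_limsup (H : IsGreedyStepSize m c μ h) (hμ : atTop.IsBoundedUnder (· ≤ ·) μ) :
    liminf h atTop ≤ limsup h atTop :=
  Filter.liminf_le_limsup (H.isBoundedUnder_le hμ) H.isBoundedUnder_ge

lemma exists_pos_le (H : IsGreedyStepSize m c μ h) (hcm : c < m) (ha : 0 < a)
    (hμ : ∀ᶠ n in atTop, a ≤ μ n) : ∃ δ > 0, ∀ n, 1 ≤ n → δ ≤ h n := by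
  have hm : (0 : ℝ) < m := Nat.cast_pos.mpr H.window_pos
  obtain ⟨N, hmN, hN⟩ := (atTop_basis' (m + 1)).eventually_iff.mp hμ
  obtain ⟨i, hi, hmin⟩ := (Finset.Icc 1 N).exists_min_image h
    (Finset.nonempty_Icc.mpr (by omega))
  have hδ : 0 < min (h i) ((m - c) / m * a) :=
    lt_min (H.pos (Finset.mem_Icc.mp hi).1) (mul_pos (div_pos (sub_pos.mpr hcm) hm) ha)
  refine ⟨_, hδ, fun n hn ↦ ?_⟩
  induction n using Nat.strong_induction_on with
  | _ n ih =>
    rcases le_or_gt n N with hnN | hNn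
    · exact (min_le_left _ _).trans (hmin n (Finset.mem_Icc.mpr ⟨hn, hnN⟩))
    · refine ((le_greedyStep_mul_self_iff H.coeff_nonneg hm ha hδ).mpr (min_le_right _ _)).trans
        (H.greedyStep_le (by omega) ha (hN hNn.le) hδ fun j hj ↦ ?_)
      rw [Finset.mem_Icc] at hj
      exact ih (n - j) (by omega) (by omega)

lemma liminf_pos (H : IsGreedyStepSize m c μ h) (hμ : atTop.IsBoundedUnder (· ≤ ·) μ)
    (hcm : c < m) (ha : 0 < a) (haμ : ∀ᶠ n in atTop, a ≤ μ n) : 0 < liminf h atTop := by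
  obtain ⟨δ, hδ, hδh⟩ := H.exists_pos_le hcm ha haμ
  exact hδ.trans_le (le_liminf_of_le (H.isBoundedUnder_le hμ).isCoboundedUnder_ge
    ((eventually_ge_atTop 1).mono hδh))

lemma greedyStep_mul_liminf_le (H : IsGreedyStepSize m c μ h)
    (hμ : atTop.IsBoundedUnder (· ≤ ·) μ) (ha : 0 < a) (haμ : ∀ᶠ n in atTop, a ≤ μ n)
    (hL : 0 < liminf h atTop) : greedyStep c (m * liminf h atTop) a ≤ liminf h atTop := by
  have hcont := continuousAt_greedyStep_mul_left H.coeff_nonneg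
    (Nat.cast_pos.mpr H.window_pos) ha hL
  refine le_of_tendsto (hcont.mono_left (nhdsWithin_le_nhds (s := Set.Iio (liminf h atTop)))) ?_
  filter_upwards [Ioo_mem_nhdsLT hL] with y ⟨hy, hyL⟩
  refine le_liminf_of_le (H.isBoundedUnder_le hμ).isCoboundedUnder_ge ?_
  filter_upwards [eventually_gt_atTop m, haμ, eventually_forall_mem_sub
    (eventually_lt_of_lt_liminf hyL H.isBoundedUnder_ge) (Finset.Icc 1 m)] with n hn haμn hwin
  exact H.greedyStep_le hn ha haμn hy fun j hj ↦ (hwin j hj).le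

lemma limsup_le_greedyStep_mul (H : IsGreedyStepSize m c μ h) (hb : 0 < b)
    (hμb : ∀ᶠ n in atTop, μ n ≤ b) (hU : 0 < limsup h atTop) :
    limsup h atTop ≤ greedyStep c (m * limsup h atTop) b := by
  have hcont := continuousAt_greedyStep_mul_left H.coeff_nonneg
    (Nat.cast_pos.mpr H.window_pos) hb hU
  refine ge_of_tendsto (hcont.mono_left (nhdsWithin_le_nhds (s := Set.Ioi (limsup h atTop)))) ?_
  filter_upwards [self_mem_nhdsWithin] with y hUy
  refine limsup_le_of_le H.isBoundedUnder_ge.isCoboundedUnder_le ?_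
  have hbdd := H.isBoundedUnder_le (isBoundedUnder_of_eventually_le hμb)
  filter_upwards [eventually_gt_atTop m, hμb, eventually_forall_mem_sub
    (eventually_lt_of_limsup_lt hUy hbdd) (Finset.Icc 1 m)] with n hn hμbn hwin
  exact H.le_greedyStep hn hμbn fun j hj ↦ (hwin j hj).le

theorem mul_le_liminf (H : IsGreedyStepSize m c μ h) (hμ : atTop.IsBoundedUnder (· ≤ ·) μ)
    (ha : 0 < a) (haμ : ∀ᶠ n in atTop, a ≤ μ n) : (m - c) / m * a ≤ liminf h atTop := by
  have hm : (0 : ℝ) < m := Nat.cast_pos.mpr H.window_pos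
  rcases lt_or_ge c m with hcm | hmc
  · have hL := H.liminf_pos hμ hcm ha haμ
    exact (greedyStep_mul_self_le_iff H.coeff_nonneg hm ha hL).mp
      (H.greedyStep_mul_liminf_le hμ ha haμ hL)
  · exact (mul_nonpos_of_nonpos_of_nonneg
      (div_nonpos_of_nonpos_of_nonneg (sub_nonpos.mpr hmc) hm.le) ha.le).trans (H.liminf_nonneg hμ)

theorem limsup_le_mul (H : IsGreedyStepSize m c μ h) (hcm : c ≤ m)
    (hμb : ∀ᶠ n in atTop, μ n ≤ b) : limsup h atTop ≤ (m - c) / m * b := by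
  have hm : (0 : ℝ) < m := Nat.cast_pos.mpr H.window_pos
  have hb : 0 < b := by
    obtain ⟨n, hμbn, hn⟩ := (hμb.and (eventually_gt_atTop m)).exists
    exact (H.bound_pos n hn).trans_le hμbn
  rcases le_or_gt (limsup h atTop) 0 with hU | hU
  · exact hU.trans (mul_nonneg (div_nonneg (sub_nonneg.mpr hcm) hm.le) hb.le)
  · exact (le_greedyStep_mul_self_iff H.coeff_nonneg hm hb hU).mp
      (H.limsup_le_greedyStep_mul hb hμb hU)

theorem tendsto (H : IsGreedyStepSize m c μ h) (hcm : c ≤ m) {μ₀ : ℝ} (hμ₀ : 0 < μ₀)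
    (hμ : Tendsto μ atTop (𝓝 μ₀)) : Tendsto h atTop (𝓝 ((m - c) / m * μ₀)) := by
  have hcont : Tendsto (fun x : ℝ ↦ (m - c) / m * x) (𝓝 μ₀) (𝓝 ((m - c) / m * μ₀)) :=
    (continuous_const_mul _).tendsto μ₀
  have hlow : (m - c) / m * μ₀ ≤ liminf h atTop := by
    refine le_of_tendsto (hcont.mono_left (nhdsWithin_le_nhds (s := Set.Iio μ₀))) ?_
    filter_upwards [Ioo_mem_nhdsLT hμ₀] with a ⟨ha, haμ₀⟩
    exact H.mul_le_liminf hμ.isBoundedUnder_le ha (hμ.eventually_const_le haμ₀)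
  have hupp : limsup h atTop ≤ (m - c) / m * μ₀ := by
    refine ge_of_tendsto (hcont.mono_left (nhdsWithin_le_nhds (s := Set.Ioi μ₀))) ?_
    filter_upwards [self_mem_nhdsWithin] with b hμ₀b
    exact H.limsup_le_mul hcm (hμ.eventually_le_const hμ₀b)
  exact tendsto_of_le_liminf_of_limsup_le hlow hupp (H.isBoundedUnder_le hμ.isBoundedUnder_le)
    H.isBoundedUnder_ge

end IsGreedyStepSize

theorem third_order_greedy_step_size_asymptotics_general
    {k : ℕ} {c : ℝ} (hk : 2 ≤ k) (hc : 0 ≤ c) (hck : c ≤ (k : ℝ) - 1)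
    {μm μp : ℝ} (hμm : 0 < μm) {μ h : ℕ → ℝ} (hμ : ∀ n, k ≤ n → μm ≤ μ n ∧ μ n ≤ μp)
    (hpos : ∀ j, 1 ≤ j → j ≤ k - 1 → 0 < h j)
    (hrec : ∀ n, k ≤ n →
      h n = (∑ j ∈ Finset.Icc 1 (k - 1), h (n - j)) * μ n
        / ((∑ j ∈ Finset.Icc 1 (k - 1), h (n - j)) + c * μ n)) :
    (((k : ℝ) - 1 - c) / ((k : ℝ) - 1)) * μm ≤ liminf h atTop ∧
    liminf h atTop ≤ limsup h atTop ∧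
    limsup h atTop ≤ (((k : ℝ) - 1 - c) / ((k : ℝ) - 1)) * μp ∧
    (∀ μ₀ : ℝ, Tendsto μ atTop (𝓝 μ₀) →
      Tendsto h atTop (𝓝 ((((k : ℝ) - 1 - c) / ((k : ℝ) - 1)) * μ₀))) := by
  have H : IsGreedyStepSize (k - 1) c μ h :=
    { window_pos := by omega
      coeff_nonneg := hc
      bound_pos := fun n hn ↦ hμm.trans_le (hμ n (by omega)).1
      init_pos := hpos
      eq_greedyStep := fun n hn ↦ hrec n (by omega) }
  have hlow : ∀ᶠ n in atTop, μm ≤ μ n := (eventually_ge_atTop k).mono fun n hn ↦ (hμ n hn).1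
  have hupp : ∀ᶠ n in atTop, μ n ≤ μp := (eventually_ge_atTop k).mono fun n hn ↦ (hμ n hn).2
  have hbdd : atTop.IsBoundedUnder (· ≤ ·) μ := isBoundedUnder_of_eventually_le hupp
  have hcast : ((k - 1 : ℕ) : ℝ) = (k : ℝ) - 1 := Nat.cast_pred (by omega)
  rw [← hcast] at hck ⊢
  exact ⟨H.mul_le_liminf hbdd hμm hlow, H.liminf_le_limsup hbdd, H.limsup_le_mul hck hupp,
    fun μ₀ hμ₀ ↦ H.tendsto hck (hμm.trans_le (ge_of_tendsto hμ₀ hlow)) hμ₀⟩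

/-- **Asymptotic behavior of the greedy step size for the third-order methods.**
For `k ∈ {4, 5}` and the recursion `h_n = S_n μ_n / (S_n + 2μ_n)` with
`S_n = Σ_{j=1}^{k−1} h_{n−j}` and `μ⁻ ≤ μ_n ≤ μ⁺`, the step sizes satisfy
`((k−3)/(k−1))·μ⁻ ≤ liminf h_n ≤ limsup h_n ≤ ((k−3)/(k−1))·μ⁺`; in particular, if
`μ_n` is constantly `μ > 0` then `h_n → ((k−3)/(k−1))·μ`. -/
theorem third_order_greedy_step_size_asymptotics
    (k : ℕ) (hk : k = 4 ∨ k = 5)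
    (μm μp : ℝ) (hμm : 0 < μm) (hμmp : μm ≤ μp)
    (μ : ℕ → ℝ) (hμ : ∀ n, k ≤ n → μm ≤ μ n ∧ μ n ≤ μp)
    (h : ℕ → ℝ) (hpos : ∀ j, 1 ≤ j → j ≤ k - 1 → 0 < h j)
    (hrec : ∀ n, k ≤ n →
      h n = (∑ j ∈ Finset.Icc 1 (k - 1), h (n - j)) * μ n
        / ((∑ j ∈ Finset.Icc 1 (k - 1), h (n - j)) + 2 * μ n)) :
    (((k : ℝ) - 3) / ((k : ℝ) - 1)) * μm ≤ Filter.liminf h Filter.atTop ∧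
    Filter.liminf h Filter.atTop ≤ Filter.limsup h Filter.atTop ∧
    Filter.limsup h Filter.atTop ≤ (((k : ℝ) - 3) / ((k : ℝ) - 1)) * μp ∧
    (∀ μ₀ : ℝ, 0 < μ₀ → (∀ n, k ≤ n → μ n = μ₀) →
      Filter.Tendsto h Filter.atTop (nhds ((((k : ℝ) - 3) / ((k : ℝ) - 1)) * μ₀))) := by
  have hck : (2 : ℝ) ≤ k - 1 := by rcases hk with rfl | rfl <;> norm_num
  rw [show (k : ℝ) - 3 = k - 1 - 2 by ring]
  obtain ⟨hlow, hle, hupp, hlim⟩ := third_order_greedy_step_size_asymptotics_general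
    (by omega) zero_le_two hck hμm hμ hpos hrec
  exact ⟨hlow, hle, hupp, fun μ₀ _ hconst ↦ hlim μ₀ (tendsto_atTop_of_eventually_const hconst)⟩
end

section
/- Let r ≥ 0 be real, and let p and k be positive integers with given positive step-size ratios ω₁, …, ω_k. Then the following are equivalent: (i) for every real s > r there exist NO nonnegative vectors δ, β satisfying the order-p conditions with parameter s (i.e., every k-step formula of order p has SSP coefficient at most r); (ii) there exists a nonzero real polynomial q of degree at most p such that q(Ω_j) ≥ 0 for all 0 ≤ j ≤ k−1, q'(Ω_j) + r·q(Ω_j) ≥ 0 for all 0 ≤ j ≤ k−1, and q(Ω_k) = 0. -/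
/-! Write a formula as the functional `q ↦ ∑ j, (δ j q(x j) + β j (q'(x j) + r q(x j)))` on
polynomials; the order conditions say that it agrees with evaluation at the endpoint `t` in
degree at most `p`.

If a polynomial `q` as in (ii) coexists with a formula for some `s > r`, then every term of the
formula vanishes at `q`: each node with `δ j > 0` is a root of `q`, each node with `β j > 0` a
double root. The product `w` of the linear factors of `q` with roots left of `t` has the same roots
at the nodes, with multiplicity, so the formula vanishes at `w` too, although `w(t) > 0`.

Conversely, a formula for `r` with strictly positive coefficients can be rewritten as one for some
`s > r`, by moving a small multiple of `β` out of `δ`. So if there is no formula for any `s > r`,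
evaluation at `t` is not a strictly positive combination of the functionals `q ↦ q(x j)` and
`q ↦ q'(x j) + r q(x j)`, and separation yields a nonzero `q` nonnegative under all of them with
`q(t) ≤ 0`. Subtracting the constant `q(t)` gives (ii).
-/

open Polynomial Topology

section Separation

variable {ι E : Type*} [AddCommGroup E] [Module ℝ E]

lemma exists_dual_ne_zero_of_range_ne_top {F : Type*} [AddCommGroup F] [Module ℝ F]
    {L : F →ₗ[ℝ] E} (hL : LinearMap.range L ≠ ⊤) (v : E) :
    ∃ f : Module.Dual ℝ E, f ≠ 0 ∧ (∀ a, f (L a) = 0) ∧ f v ≤ 0 := by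
  obtain ⟨f, hf, hker⟩ := Submodule.exists_le_ker_of_lt_top _ hL.lt_top
  have hfL (a : F) : f (L a) = 0 := hker (LinearMap.mem_range_self L a)
  rcases le_total (f v) 0 with hv | hv
  · exact ⟨f, hf, hfL, hv⟩
  · exact ⟨-f, neg_ne_zero.mpr hf, by simpa using hfL, by simpa using hv⟩

lemma exists_dual_lt_of_surjective [Finite ι] {L : (ι → ℝ) →ₗ[ℝ] E}
    (hL : Function.Surjective L) {v : E} (hv : ∀ a : ι → ℝ, (∀ i, 0 < a i) → L a ≠ v) :
    ∃ f : Module.Dual ℝ E, ∀ a : ι → ℝ, (∀ i, 0 < a i) → f v < f (L a) := by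
  let orthant : Set (ι → ℝ) := Set.univ.pi fun _ ↦ Set.Ioi 0
  have horthant_open : IsOpen orthant := isOpen_set_pi Set.finite_univ fun _ _ ↦ isOpen_Ioi
  have horthant_convex : Convex ℝ orthant := convex_pi fun _ _ ↦ convex_Ioi 0
  let _ : TopologicalSpace E := moduleTopology ℝ E
  have _ : IsModuleTopology ℝ E := ⟨rfl⟩
  have _ : IsTopologicalAddGroup E := IsModuleTopology.topologicalAddGroup ℝ E
  obtain ⟨f, hf⟩ := geometric_hahn_banach_point_open (x := v) (horthant_convex.linear_image L)
    (IsModuleTopology.isOpenMap_of_surjective hL _ horthant_open)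
    (by rintro ⟨a, ha, hav⟩; exact hv a (fun i ↦ ha i trivial) hav)
  exact ⟨f, fun a ha ↦ hf _ ⟨a, fun i _ ↦ ha i, rfl⟩⟩

lemma nonneg_and_nonpos_of_forall_pos_le [Finite ι] {g : (ι → ℝ) →ₗ[ℝ] ℝ} {c : ℝ}
    (h : ∀ a : ι → ℝ, (∀ i, 0 < a i) → c ≤ g a) :
    (∀ a, 0 ≤ a → 0 ≤ g a) ∧ c ≤ 0 := by
  have hclosure (a : ι → ℝ) (ha : 0 ≤ a) : c ≤ g a := by
    have hmem : a ∈ closure (Set.univ.pi fun _ ↦ Set.Ioi (0 : ℝ)) := by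
      simpa [closure_pi_set, Pi.le_def] using ha
    refine closure_minimal (t := {b | c ≤ g b}) ?_
      (isClosed_le continuous_const g.continuous_of_finiteDimensional) hmem
    exact fun b hb ↦ h b fun i ↦ hb i trivial
  have hc : c ≤ 0 := by simpa using hclosure 0 le_rfl
  refine ⟨fun a ha ↦ ?_, hc⟩
  by_contra! hneg
  have hscale : 0 ≤ (c - 1) / g a := div_nonneg_of_nonpos (by linarith) hneg.le
  have := hclosure (((c - 1) / g a) • a) (smul_nonneg hscale ha)
  rw [map_smul, smul_eq_mul, div_mul_cancel₀ _ hneg.ne] at this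
  linarith

theorem exists_dual_nonneg_of_ne_pos_combination [Fintype ι] (u : ι → E) (v : E)
    (hv : ∀ a : ι → ℝ, (∀ i, 0 < a i) → ∑ i, a i • u i ≠ v) :
    ∃ f : Module.Dual ℝ E, f ≠ 0 ∧ (∀ i, 0 ≤ f (u i)) ∧ f v ≤ 0 := by
  classical
  let L : (ι → ℝ) →ₗ[ℝ] E := Fintype.linearCombination ℝ u
  have hLu (i : ι) : L (Pi.single i 1) = u i := by simp [L]
  by_cases hL : LinearMap.range L = ⊤
  · obtain ⟨f, hf⟩ := exists_dual_lt_of_surjective (LinearMap.range_eq_top.mp hL) hv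
    obtain ⟨hnonneg, hfv⟩ :=
      nonneg_and_nonpos_of_forall_pos_le (g := f ∘ₗ L) fun a ha ↦ (hf a ha).le
    refine ⟨f, ?_, fun i ↦ ?_, hfv⟩
    · rintro rfl
      exact (hf 1 fun _ ↦ one_pos).false
    · simpa [hLu] using hnonneg (Pi.single i 1) (Pi.single_nonneg.mpr zero_le_one)
  · obtain ⟨f, hf, hfL, hfv⟩ := exists_dual_ne_zero_of_range_ne_top hL v
    exact ⟨f, hf, fun i ↦ (hLu i ▸ hfL (Pi.single i 1)).ge, hfv⟩

theorem exists_ne_zero_nonneg_of_ne_pos_combination [Fintype ι] [FiniteDimensional ℝ E]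
    (φ : ι → Module.Dual ℝ E) (τ : Module.Dual ℝ E)
    (hτ : ∀ a : ι → ℝ, (∀ i, 0 < a i) → ∑ i, a i • φ i ≠ τ) :
    ∃ v : E, v ≠ 0 ∧ (∀ i, 0 ≤ φ i v) ∧ τ v ≤ 0 := by
  obtain ⟨f, hf, hφ, hfτ⟩ := exists_dual_nonneg_of_ne_pos_combination φ τ hτ
  refine ⟨(Module.evalEquiv ℝ E).symm f, by simpa using hf, fun i ↦ ?_, ?_⟩
  · simpa using hφ i
  · simpa using hfτ

end Separation

lemma exists_pos_forall_mul_le {ι : Type*} [Finite ι] {a : ι → ℝ} (ha : ∀ i, 0 < a i)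
    (b : ι → ℝ) : ∃ ε > 0, ∀ i, ε * b i ≤ a i := by
  have hsmall (i : ι) : ∀ᶠ ε in 𝓝[>] (0 : ℝ), ε * b i ≤ a i := by
    have hcont : ContinuousAt (fun ε : ℝ ↦ ε * b i) 0 := by fun_prop
    exact nhdsWithin_le_nhds ((hcont.eventually_lt_const (by simpa using ha i)).mono
      fun _ h ↦ h.le)
  obtain ⟨ε, hε, hε_pos⟩ :=
    ((Filter.eventually_all.mpr hsmall).and self_mem_nhdsWithin).exists
  exact ⟨ε, hε_pos, hε⟩

lemma X_sub_C_sq_dvd_iff {R : Type*} [CommRing R] {q : R[X]} {a : R} :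
    (X - C a) ^ 2 ∣ q ↔ q.eval a = 0 ∧ (derivative q).eval a = 0 := by
  constructor
  · rintro ⟨u, rfl⟩
    simp [derivative_pow]
  · rintro ⟨hroot, hderiv⟩
    obtain ⟨u, rfl⟩ := dvd_iff_isRoot.mpr hroot
    obtain ⟨v, rfl⟩ : X - C a ∣ u := dvd_iff_isRoot.mpr (by simpa using hderiv)
    exact ⟨v, by ring⟩

theorem exists_dvd_eval_pos_forall_pow_dvd {K : Type*} [Field K] [LinearOrder K]
    [IsStrictOrderedRing K] {q : K[X]} (hq : q ≠ 0) (t : K) :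
    ∃ w, w ∣ q ∧ 0 < w.eval t ∧
      ∀ a < t, ∀ n : ℕ, (X - C a) ^ n ∣ q → (X - C a) ^ n ∣ w := by
  let roots := q.roots.filter (· < t)
  refine ⟨(roots.map fun a ↦ X - C a).prod,
    (Multiset.prod_X_sub_C_dvd_iff_le_roots hq _).mpr (Multiset.filter_le _ _), ?_,
    fun a hat n hdvd ↦ ?_⟩
  · rw [eval_multiset_prod, Multiset.map_map]
    refine Multiset.prod_pos fun y hy ↦ ?_
    obtain ⟨a, ha, rfl⟩ := Multiset.mem_map.mp hy
    simpa using Multiset.of_mem_filter ha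
  · have hcount : n ≤ roots.count a := by
      rw [Multiset.count_filter_of_pos (p := (· < t)) hat, count_roots]
      exact (le_rootMultiplicity_iff hq).mpr hdvd
    simpa using Multiset.prod_dvd_prod_of_le
      (Multiset.map_le_map (f := fun a ↦ X - C a) (Multiset.le_count_iff_replicate_le.mp hcount))

lemma forall_natDegree_le_eq_iff {R M : Type*} [Semiring R] [AddCommMonoid M] [Module R M]
    {p : ℕ} {L L' : R[X] →ₗ[R] M} :
    (∀ q : R[X], q.natDegree ≤ p → L q = L' q) ↔ ∀ m ≤ p, L (X ^ m) = L' (X ^ m) := by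
  refine ⟨fun h m hm ↦ h _ ((natDegree_X_pow_le m).trans hm), fun h q hq ↦ ?_⟩
  rw [q.as_sum_range_C_mul_X_pow' (Nat.lt_succ_of_le hq), map_sum, map_sum]
  refine Finset.sum_congr rfl fun m hm ↦ ?_
  rw [← smul_eq_C_mul, map_smul, map_smul, h m (Finset.mem_range_succ_iff.mp hm)]

section Formula

variable {ι : Type*}

/-- The functional `q ↦ q'(x) + r q(x)` on polynomials. -/
noncomputable def derivAddEval (r x : ℝ) : ℝ[X] →ₗ[ℝ] ℝ :=
  leval x ∘ₗ derivative + r • leval x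

@[simp]
lemma derivAddEval_apply (r x : ℝ) (q : ℝ[X]) :
    derivAddEval r x q = (derivative q).eval x + r * q.eval x := by
  simp [derivAddEval]

/-- The functional on polynomials given by a multistep formula with nodes `x` and coefficient
vectors `δ`, `β`. The order-`p` conditions with parameter `r` say that it agrees with evaluation at
the endpoint on polynomials of degree at most `p`. -/
noncomputable def formulaFunctional [Fintype ι] (r : ℝ) (x δ β : ι → ℝ) : ℝ[X] →ₗ[ℝ] ℝ :=
  ∑ j, (δ j • leval (x j) + β j • derivAddEval r (x j))

lemma formulaFunctional_apply [Fintype ι] (r : ℝ) (x δ β : ι → ℝ) (q : ℝ[X]) :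
    formulaFunctional r x δ β q =
      ∑ j, (δ j * q.eval (x j) + β j * ((derivative q).eval (x j) + r * q.eval (x j))) := by
  simp [formulaFunctional]

lemma formulaFunctional_add_param [Fintype ι] (r ε : ℝ) (x δ β : ι → ℝ) :
    formulaFunctional (r + ε) x (δ - ε • β) β = formulaFunctional r x δ β := by
  refine LinearMap.ext fun q ↦ ?_
  simp only [formulaFunctional_apply, Pi.sub_apply, Pi.smul_apply, smul_eq_mul]
  exact Finset.sum_congr rfl fun j _ ↦ by ring

/-- The inequalities at the nodes `x` required of the dual polynomial `q`. A nonzero such `q` of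
degree at most `p` that also vanishes at the endpoint bounds the SSP coefficient of order-`p`
formulas by `r`. -/
structure NonnegAtNodes (r : ℝ) (x : ι → ℝ) (q : ℝ[X]) : Prop where
  eval_nonneg : ∀ j, 0 ≤ q.eval (x j)
  derivative_nonneg : ∀ j, 0 ≤ (derivative q).eval (x j) + r * q.eval (x j)

namespace NonnegAtNodes

variable {r s : ℝ} {x δ β : ι → ℝ} {q : ℝ[X]}

lemma mono (hq : NonnegAtNodes r x q) (hrs : r ≤ s) : NonnegAtNodes s x q where
  eval_nonneg := hq.eval_nonneg
  derivative_nonneg j := (hq.derivative_nonneg j).trans <| by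
    gcongr
    exact hq.eval_nonneg j

lemma add_C (hq : NonnegAtNodes r x q) (hr : 0 ≤ r) {c : ℝ} (hc : 0 ≤ c) :
    NonnegAtNodes r x (q + C c) where
  eval_nonneg j := by simpa using add_nonneg (hq.eval_nonneg j) hc
  derivative_nonneg j := by
    simpa [mul_add, add_assoc] using add_nonneg (hq.derivative_nonneg j) (mul_nonneg hr hc)

lemma eval_eq_zero_and_derivative_eq_zero (hq : NonnegAtNodes r x q) (hrs : r < s) {j : ι}
    (h : (derivative q).eval (x j) + s * q.eval (x j) = 0) :
    q.eval (x j) = 0 ∧ (derivative q).eval (x j) = 0 := by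
  have hgap : 0 ≤ (s - r) * q.eval (x j) :=
    mul_nonneg (sub_nonneg.mpr hrs.le) (hq.eval_nonneg j)
  have hzero : (s - r) * q.eval (x j) = 0 := by linarith [hq.derivative_nonneg j]
  have heval : q.eval (x j) = 0 :=
    (mul_eq_zero.mp hzero).resolve_left (sub_ne_zero.mpr hrs.ne')
  exact ⟨heval, by simpa [heval] using h⟩

lemma terms_eq_zero [Fintype ι] (hq : NonnegAtNodes r x q) (hδ : 0 ≤ δ) (hβ : 0 ≤ β)
    (h : formulaFunctional r x δ β q = 0) (j : ι) :
    δ j * q.eval (x j) = 0 ∧ β j * ((derivative q).eval (x j) + r * q.eval (x j)) = 0 := by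
  have hδ_term (i : ι) : 0 ≤ δ i * q.eval (x i) := mul_nonneg (hδ i) (hq.eval_nonneg i)
  have hβ_term (i : ι) : 0 ≤ β i * ((derivative q).eval (x i) + r * q.eval (x i)) :=
    mul_nonneg (hβ i) (hq.derivative_nonneg i)
  rw [formulaFunctional_apply,
    Finset.sum_eq_zero_iff_of_nonneg fun i _ ↦ add_nonneg (hδ_term i) (hβ_term i)] at h
  exact (add_eq_zero_iff_of_nonneg (hδ_term j) (hβ_term j)).mp (h j (Finset.mem_univ j))

lemma formulaFunctional_eq_zero_of_pow_dvd [Fintype ι] (hq : NonnegAtNodes r x q) (hrs : r < s)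
    (hδ : 0 ≤ δ) (hβ : 0 ≤ β) (hzero : formulaFunctional s x δ β q = 0) {w : ℝ[X]}
    (hw : ∀ j, ∀ n : ℕ, (X - C (x j)) ^ n ∣ q → (X - C (x j)) ^ n ∣ w) :
    formulaFunctional s x δ β w = 0 := by
  rw [formulaFunctional_apply]
  refine Finset.sum_eq_zero fun j _ ↦ ?_
  obtain ⟨hδ_term, hβ_term⟩ := (hq.mono hrs.le).terms_eq_zero hδ hβ hzero j
  have hroot (h : q.eval (x j) = 0) : w.eval (x j) = 0 := by
    have := hw j 1
    rw [pow_one, dvd_iff_isRoot, dvd_iff_isRoot] at this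
    exact this h
  have hδw : δ j * w.eval (x j) = 0 := by
    rcases mul_eq_zero.mp hδ_term with h | h
    · rw [h, zero_mul]
    · rw [hroot h, mul_zero]
  have hβw : β j * ((derivative w).eval (x j) + s * w.eval (x j)) = 0 := by
    rcases mul_eq_zero.mp hβ_term with h | h
    · rw [h, zero_mul]
    · obtain ⟨heval, hderiv⟩ := X_sub_C_sq_dvd_iff.mp <|
        hw j 2 (X_sub_C_sq_dvd_iff.mpr (hq.eval_eq_zero_and_derivative_eq_zero hrs h))
      rw [heval, hderiv, mul_zero, add_zero, mul_zero]
  rw [hδw, hβw, add_zero]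

end NonnegAtNodes

variable [Fintype ι] {r t : ℝ} {x : ι → ℝ} {p : ℕ}

theorem not_exact_of_nonnegAtNodes {s : ℝ} {δ β : ι → ℝ} {q : ℝ[X]} (hx : ∀ j, x j < t)
    (hq₀ : q ≠ 0) (hqp : q.natDegree ≤ p) (hq : NonnegAtNodes r x q) (hqt : q.eval t = 0)
    (hrs : r < s) (hδ : 0 ≤ δ) (hβ : 0 ≤ β) :
    ¬ ∀ w : ℝ[X], w.natDegree ≤ p → formulaFunctional s x δ β w = w.eval t := by
  intro hexact
  obtain ⟨w, hwq, hwt, hw⟩ := exists_dvd_eval_pos_forall_pow_dvd hq₀ t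
  have hw_zero : formulaFunctional s x δ β w = 0 :=
    hq.formulaFunctional_eq_zero_of_pow_dvd hrs hδ hβ ((hexact q hqp).trans hqt)
      fun j ↦ hw (x j) (hx j)
  exact hwt.ne' ((hexact w ((natDegree_le_of_dvd hwq hq₀).trans hqp)).symm.trans hw_zero)

lemma exists_nonnegAtNodes_eval_nonpos
    (h : ∀ δ β : ι → ℝ, (∀ j, 0 < δ j) → (∀ j, 0 < β j) →
      ¬ ∀ q : ℝ[X], q.natDegree ≤ p → formulaFunctional r x δ β q = q.eval t) :
    ∃ q : ℝ[X], q ≠ 0 ∧ q.natDegree ≤ p ∧ NonnegAtNodes r x q ∧ q.eval t ≤ 0 := by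
  have hmem {q : ℝ[X]} : q ∈ degreeLT ℝ (p + 1) ↔ q.natDegree ≤ p := by
    rw [mem_degreeLT, degree_lt_iff_coeff_zero, natDegree_le_iff_coeff_eq_zero]
    simp only [Nat.succ_le_iff]
  let res : Module.Dual ℝ ℝ[X] →ₗ[ℝ] Module.Dual ℝ (degreeLT ℝ (p + 1)) :=
    (degreeLT ℝ (p + 1)).dualRestrict
  obtain ⟨q, hq₀, hq, hqt⟩ := exists_ne_zero_nonneg_of_ne_pos_combination
    (Sum.elim (fun j ↦ res (leval (x j))) (fun j ↦ res (derivAddEval r (x j)))) (res (leval t))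
    (fun a ha hsum ↦ h (a ∘ Sum.inl) (a ∘ Sum.inr) (fun j ↦ ha _) (fun j ↦ ha _) fun q hq ↦ by
      simpa [res, formulaFunctional, Finset.sum_add_distrib] using
        LinearMap.congr_fun hsum ⟨q, hmem.mpr hq⟩)
  exact ⟨q, by simpa using hq₀, hmem.mp q.2,
    ⟨fun j ↦ by simpa [res] using hq (Sum.inl j), fun j ↦ by simpa [res] using hq (Sum.inr j)⟩,
    by simpa [res] using hqt⟩

theorem exists_nonnegAtNodes_of_not_exact [Nonempty ι] (hr : 0 ≤ r)
    (h : ∀ s > r, ∀ δ β : ι → ℝ, 0 ≤ δ → 0 ≤ β →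
      ¬ ∀ q : ℝ[X], q.natDegree ≤ p → formulaFunctional s x δ β q = q.eval t) :
    ∃ q : ℝ[X], q ≠ 0 ∧ q.natDegree ≤ p ∧ NonnegAtNodes r x q ∧ q.eval t = 0 := by
  obtain ⟨q, hq₀, hqp, hq, hqt⟩ : ∃ q : ℝ[X], q ≠ 0 ∧ q.natDegree ≤ p ∧
      NonnegAtNodes r x q ∧ q.eval t ≤ 0 := by
    refine exists_nonnegAtNodes_eval_nonpos fun δ β hδ hβ hexact ↦ ?_
    obtain ⟨ε, hε, hεβ⟩ := exists_pos_forall_mul_le hδ β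
    refine h (r + ε) (lt_add_of_pos_right r hε) (δ - ε • β) β
      (fun j ↦ sub_nonneg.mpr (hεβ j)) (fun j ↦ (hβ j).le) fun q hqp ↦ ?_
    rw [formulaFunctional_add_param, hexact q hqp]
  refine ⟨q + C (-q.eval t), fun hconst ↦ hq₀ ?_, natDegree_add_C.trans_le hqp,
    hq.add_C hr (neg_nonneg.mpr hqt), by simp⟩
  have hqC : q = C (q.eval t) := by simpa [add_eq_zero_iff_eq_neg] using hconst
  have hqt_nonneg : 0 ≤ q.eval t := by
    obtain ⟨j⟩ := ‹Nonempty ι›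
    have := hq.eval_nonneg j
    rwa [hqC, eval_C] at this
  rw [hqC, le_antisymm hqt hqt_nonneg, C_0]

end Formula

lemma orderCond_iff_formulaFunctional_eq {k p : ℕ} {ω : ℕ → ℝ} {r : ℝ} {δ β : ℕ → ℝ} :
    OrderCond k p ω r δ β ↔ ∀ q : ℝ[X], q.natDegree ≤ p →
      formulaFunctional r (fun j : Fin k ↦ OmegaSum ω j) (fun j ↦ δ j) (fun j ↦ β j) q =
        q.eval (OmegaSum ω k) := by
  have hmoment (m : ℕ) :
      formulaFunctional r (fun j : Fin k ↦ OmegaSum ω j) (fun j ↦ δ j) (fun j ↦ β j) (X ^ m) =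
        ∑ j ∈ Finset.range k, (OmegaSum ω j ^ m * (δ j + r * β j)
          + (m : ℝ) * OmegaSum ω j ^ (m - 1) * β j) := by
    rw [formulaFunctional_apply, Finset.sum_range]
    refine Finset.sum_congr rfl fun j _ ↦ ?_
    simp only [eval_pow, eval_X, derivative_X_pow, eval_mul, eval_C]
    ring
  simp only [← leval_apply (R := ℝ), forall_natDegree_le_eq_iff, hmoment]
  simp only [leval_apply, eval_pow, eval_X]
  refine ⟨fun ⟨hzero, hpos⟩ m hm ↦ ?_, fun h ↦ ⟨by simpa using h 0 p.zero_le, fun m _ ↦ h m⟩⟩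
  rcases m.eq_zero_or_pos with rfl | hm₀
  · simpa using hzero
  · exact hpos m hm₀ hm

lemma exists_orderCond_iff {k p : ℕ} {ω : ℕ → ℝ} {r : ℝ} :
    (∃ δ β : ℕ → ℝ, (∀ j < k, 0 ≤ δ j) ∧ (∀ j < k, 0 ≤ β j) ∧ OrderCond k p ω r δ β) ↔
      ∃ δ β : Fin k → ℝ, 0 ≤ δ ∧ 0 ≤ β ∧ ∀ q : ℝ[X], q.natDegree ≤ p →
        formulaFunctional r (fun j : Fin k ↦ OmegaSum ω j) δ β q = q.eval (OmegaSum ω k) := by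
  have hextend (a : Fin k → ℝ) (j : Fin k) : Function.extend Fin.val a 0 (j : ℕ) = a j :=
    Fin.val_injective.extend_apply a 0 j
  constructor
  · rintro ⟨δ, β, hδ, hβ, hord⟩
    exact ⟨fun j ↦ δ j, fun j ↦ β j, fun j ↦ hδ j j.2, fun j ↦ hβ j j.2,
      orderCond_iff_formulaFunctional_eq.mp hord⟩
  · rintro ⟨δ, β, hδ, hβ, hexact⟩
    refine ⟨Function.extend Fin.val δ 0, Function.extend Fin.val β 0,
      fun j hj ↦ (hδ ⟨j, hj⟩).trans_eq (hextend δ ⟨j, hj⟩).symm,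
      fun j hj ↦ (hβ ⟨j, hj⟩).trans_eq (hextend β ⟨j, hj⟩).symm, ?_⟩
    simpa only [orderCond_iff_formulaFunctional_eq, hextend] using hexact

lemma OmegaSum_lt_OmegaSum {k : ℕ} {ω : ℕ → ℝ} (hω : ∀ i, 1 ≤ i → i ≤ k → 0 < ω i) {j : ℕ}
    (hj : j < k) : OmegaSum ω j < OmegaSum ω k := by
  refine Finset.sum_lt_sum_of_subset (Finset.range_subset_range.mpr hj.le) (i := j)
    (by simpa using hj) (by simp) (hω _ (by omega) (by omega)) fun i hi _ ↦ ?_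
  have := Finset.mem_range.mp hi
  exact (hω _ (by omega) (by omega)).le

/-- **Duality characterization of upper bounds for the SSP coefficient.**
Every `k`-step formula of order `p` has SSP coefficient at most `r` if and only if
there is a nonzero real polynomial `q` of degree at most `p` with `q(Ω_j) ≥ 0` and
`q'(Ω_j) + r q(Ω_j) ≥ 0` for `0 ≤ j ≤ k−1`, and `q(Ω_k) = 0`. -/
theorem ssp_duality_characterization
    (k p : ℕ) (hk : 1 ≤ k) (hp : 1 ≤ p)
    (ω : ℕ → ℝ) (hω : ∀ i, 1 ≤ i → i ≤ k → 0 < ω i)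
    (r : ℝ) (hr : 0 ≤ r) :
    (∀ s : ℝ, r < s →
      ¬ ∃ δ β : ℕ → ℝ,
        (∀ j < k, 0 ≤ δ j) ∧ (∀ j < k, 0 ≤ β j) ∧ OrderCond k p ω s δ β)
    ↔ ∃ q : Polynomial ℝ, q ≠ 0 ∧ q.natDegree ≤ p ∧
        (∀ j < k, 0 ≤ q.eval (OmegaSum ω j)) ∧
        (∀ j < k, 0 ≤ (Polynomial.derivative q).eval (OmegaSum ω j)
          + r * q.eval (OmegaSum ω j)) ∧
        q.eval (OmegaSum ω k) = 0 := by
  have : Nonempty (Fin k) := ⟨⟨0, hk⟩⟩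
  simp only [exists_orderCond_iff]
  constructor
  · intro h
    obtain ⟨q, hq₀, hqp, hq, hqt⟩ := exists_nonnegAtNodes_of_not_exact hr
      fun s hs δ β hδ hβ hexact ↦ h s hs ⟨δ, β, hδ, hβ, hexact⟩
    exact ⟨q, hq₀, hqp, fun j hj ↦ hq.eval_nonneg ⟨j, hj⟩,
      fun j hj ↦ hq.derivative_nonneg ⟨j, hj⟩, hqt⟩
  · rintro ⟨q, hq₀, hqp, heval, hderiv, hqt⟩ s hs ⟨δ, β, hδ, hβ, hexact⟩
    have hq : NonnegAtNodes r (fun j : Fin k ↦ OmegaSum ω j) q :=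
      ⟨fun j ↦ heval j j.2, fun j ↦ hderiv j j.2⟩
    exact not_exact_of_nonnegAtNodes (fun j ↦ OmegaSum_lt_OmegaSum hω j.2) hq₀ hqp hq hqt hs
      hδ hβ hexact
end
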